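/- Let T > 0, α > 0 and c ≥ 0. There exists a constant C > 0, depending only on α, c and T, with the following property: whenever u : [0,T] → [0,∞) is absolutely continuous with u(0) = 0, v : [0,T] → [0,∞) is Lebesgue integrable, g : [0,T] → [0,∞) is square integrable, and u'(t) ≤ −2α·v(t) + 2c·u(t) + 2·√(u(t))·g(t) for almost every t ∈ [0,T], one has ∫_0^T v(t) dt ≤ C ∫_0^T g(t)² dt. -/

import Mathlib

open MeasureTheory Set intervalIntegral

/-!
By Young's inequality `2 √u g ≤ u + g ^ 2` the differential inequality becomes linear,
`u' ≤ K u + g ^ 2 - 2 α v` with `K = 2 |c| + 1`. Multiplying by the integrating factor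
`exp (K (T - t))`, which stays between `1` and `exp (K T)`, and integrating gives
`u T + 2 α ∫ v ≤ exp (K T) (u 0 + ∫ g ^ 2)`; the term `u T ≥ 0` is dropped.
-/

theorem absolutelyContinuousOnInterval_of_eq_add_integral {f f' : ℝ → ℝ} {a b : ℝ}
    (hf' : IntervalIntegrable f' volume a b)
    (hf : ∀ t ∈ uIcc a b, f t = f a + ∫ s in a..t, f' s) :
    AbsolutelyContinuousOnInterval f a b := by
  have hprim := hf'.absolutelyContinuousOnInterval_intervalIntegral (c := a) left_mem_uIcc
  rw [absolutelyContinuousOnInterval_iff] at hprim ⊢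
  intro ε hε
  obtain ⟨δ, hδ, hprim⟩ := hprim ε hε
  refine ⟨δ, hδ, fun I hI hIδ => ?_⟩
  convert! hprim I hI hIδ using 2 with i hi
  rw [hf _ (hI.1 i hi).1, hf _ (hI.1 i hi).2, dist_add_left]

theorem ae_hasDerivAt_of_eq_add_integral {E : Type*} [NormedAddCommGroup E]
    [NormedSpace ℝ E] [CompleteSpace E] {f f' : ℝ → E} {a b : ℝ}
    (hf' : IntervalIntegrable f' volume a b)
    (hf : ∀ t ∈ uIcc a b, f t = f a + ∫ s in a..t, f' s) :
    ∀ᵐ t, t ∈ uIoo a b → HasDerivAt f (f' t) t := by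
  filter_upwards [hf'.ae_hasDerivAt_integral] with t hprim ht
  have hnear : f =ᶠ[nhds t] fun t => f a + ∫ s in a..t, f' s := by
    filter_upwards [isOpen_Ioo.mem_nhds ht] with s hs using hf s (uIoo_subset_uIcc_self hs)
  exact ((hprim (uIoo_subset_uIcc_self ht) a left_mem_uIcc).const_add (f a)).congr_of_eventuallyEq
    hnear

section Gronwall

variable {a b K : ℝ} {u : ℝ → ℝ}

theorem le_exp_mul_add_integral_of_deriv_le {h : ℝ → ℝ} (hab : a ≤ b)
    (hu : AbsolutelyContinuousOnInterval u a b) (hh : IntervalIntegrable h volume a b)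
    (hderiv : ∀ᵐ t ∂volume.restrict (Icc a b), deriv u t ≤ K * u t + h t) :
    u b ≤ Real.exp (K * (b - a)) * u a + ∫ t in a..b, Real.exp (K * (b - t)) * h t := by
  let E : ℝ → ℝ := fun t => Real.exp (K * (b - t))
  have hE : AbsolutelyContinuousOnInterval E a b :=
    ContDiffOn.absolutelyContinuousOnInterval (by fun_prop)
  have hE' (t : ℝ) : deriv E t = -K * E t := by
    have := (((hasDerivAt_id t).const_sub b).const_mul K).exp
    simpa [E, mul_comm] using this.deriv
  have hparts : ∫ t in a..b, deriv u t * E t + u t * deriv E t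
      = u b - Real.exp (K * (b - a)) * u a := by
    simpa [E, mul_comm] using hu.integral_deriv_mul_eq_sub hE
  have hmono : ∫ t in a..b, deriv u t * E t + u t * deriv E t ≤ ∫ t in a..b, E t * h t := by
    refine integral_mono_ae_restrict hab
      ((hu.intervalIntegrable_deriv.mul_continuousOn hE.continuousOn).add
        (hE.intervalIntegrable_deriv.continuousOn_mul hu.continuousOn))
      (hh.continuousOn_mul hE.continuousOn) ?_
    filter_upwards [hderiv] with t ht
    calc deriv u t * E t + u t * deriv E t
        = E t * (deriv u t - K * u t) := by rw [hE']; ring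
      _ ≤ E t * h t := mul_le_mul_of_nonneg_left (by linarith) (Real.exp_pos _).le
  linarith

theorem add_integral_le_exp_mul_of_deriv_add_le {f w : ℝ → ℝ} (hab : a ≤ b) (hK : 0 ≤ K)
    (hu : AbsolutelyContinuousOnInterval u a b)
    (hf : IntervalIntegrable f volume a b) (hw : IntervalIntegrable w volume a b)
    (hf₀ : ∀ᵐ t ∂volume.restrict (Icc a b), 0 ≤ f t)
    (hw₀ : ∀ᵐ t ∂volume.restrict (Icc a b), 0 ≤ w t)
    (hderiv : ∀ᵐ t ∂volume.restrict (Icc a b), deriv u t + w t ≤ K * u t + f t) :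
    u b + ∫ t in a..b, w t ≤ Real.exp (K * (b - a)) * (u a + ∫ t in a..b, f t) := by
  have hderiv_le : ∀ᵐ t ∂volume.restrict (Icc a b), deriv u t ≤ K * u t + (f t - w t) :=
    hderiv.mono fun t ht => by linarith
  have hgronwall := le_exp_mul_add_integral_of_deriv_le hab hu (hf.sub hw) hderiv_le
  have hmono : ∫ t in a..b, Real.exp (K * (b - t)) * (f t - w t)
      ≤ ∫ t in a..b, (Real.exp (K * (b - a)) * f t - w t) := by
    refine integral_mono_ae_restrict hab
      ((hf.sub hw).continuousOn_mul (by fun_prop)) ((hf.const_mul _).sub hw) ?_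
    filter_upwards [hf₀, hw₀, ae_restrict_mem measurableSet_Icc] with t hft hwt ht
    have hupper : Real.exp (K * (b - t)) ≤ Real.exp (K * (b - a)) := by
      gcongr
      exact ht.1
    have hlower : 1 ≤ Real.exp (K * (b - t)) :=
      Real.one_le_exp (mul_nonneg hK (sub_nonneg.2 ht.2))
    rw [mul_sub]
    exact sub_le_sub (mul_le_mul_of_nonneg_right hupper hft) (le_mul_of_one_le_left hwt hlower)
  rw [integral_sub (hf.const_mul _) hw,
    intervalIntegral.integral_const_mul] at hmono
  linarith

end Gronwall

theorem two_mul_sqrt_mul_le_add_sq {x : ℝ} (hx : 0 ≤ x) (y : ℝ) :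
    2 * Real.sqrt x * y ≤ x + y ^ 2 := by
  simpa only [Real.sq_sqrt hx] using two_mul_le_add_sq (Real.sqrt x) y

theorem integral_le_of_gronwall_dissipative_general
    {a b α : ℝ} (c : ℝ) (hab : a ≤ b) (hα : 0 < α) :
    ∃ C : ℝ, 0 < C ∧
      ∀ u u' v g : ℝ → ℝ,
        (∀ t ∈ Icc a b, 0 ≤ u t) →
        IntegrableOn u' (Icc a b) →
        (∀ t ∈ Icc a b, u t = u a + ∫ s in a..t, u' s) →
        (∀ t ∈ Icc a b, 0 ≤ v t) →
        IntegrableOn v (Icc a b) →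
        IntegrableOn (fun t => g t ^ 2) (Icc a b) →
        (∀ᵐ t ∂(volume.restrict (Icc a b)),
          u' t ≤ -(2 * α) * v t + 2 * c * u t + 2 * Real.sqrt (u t) * g t) →
        ∫ t in a..b, v t ≤ C * (u a + ∫ t in a..b, g t ^ 2) := by
  refine ⟨Real.exp ((2 * |c| + 1) * (b - a)) / (2 * α), by positivity, ?_⟩
  intro u u' v g hu₀ hu' hu hv₀ hv hg hineq
  rw [← intervalIntegrable_iff_integrableOn_Icc_of_le hab] at hu' hv hg
  rw [← uIcc_of_le hab] at hu
  have hderiv : ∀ᵐ t ∂volume.restrict (Icc a b),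
      deriv u t + 2 * α * v t ≤ (2 * |c| + 1) * u t + g t ^ 2 := by
    have hdu := ae_hasDerivAt_of_eq_add_integral hu' hu
    rw [uIoo_of_le hab, ← ae_restrict_iff' measurableSet_Ioo,
      restrict_Ioo_eq_restrict_Icc] at hdu
    filter_upwards [hineq, hdu, ae_restrict_mem measurableSet_Icc] with t hineq hdu ht
    rw [hdu.deriv]
    have hyoung := two_mul_sqrt_mul_le_add_sq (hu₀ t ht) (g t)
    have hcu := mul_le_mul_of_nonneg_right (le_abs_self c) (hu₀ t ht)
    linarith
  have hbound := add_integral_le_exp_mul_of_deriv_add_le hab (by positivity)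
    (absolutelyContinuousOnInterval_of_eq_add_integral hu' hu) hg (hv.const_mul (2 * α))
    (ae_of_all _ fun t => sq_nonneg (g t))
    (ae_restrict_of_forall_mem measurableSet_Icc fun t ht => mul_nonneg (by positivity) (hv₀ t ht))
    hderiv
  rw [intervalIntegral.integral_const_mul] at hbound
  rw [div_mul_eq_mul_div, le_div_iff₀ (by positivity)]
  linarith [hu₀ b (right_mem_Icc.2 hab)]

/-- Deterministic integral inequality: for `T, α > 0` and `c ≥ 0` there is a constant
`C > 0` (depending only on `α, c, T`) such that whenever `u ≥ 0` is absolutely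
continuous on `[0,T]` with `u 0 = 0`, `v ≥ 0` is integrable, `g ≥ 0` is square
integrable and `u' ≤ -2α v + 2c u + 2 √u g` a.e., one has `∫_0^T v ≤ C ∫_0^T g²`. -/
theorem integral_le_of_gronwall_dissipative
    (T α c : ℝ) (hT : 0 < T) (hα : 0 < α) (hc : 0 ≤ c) :
    ∃ C : ℝ, 0 < C ∧
      ∀ u u' v g : ℝ → ℝ,
        (∀ t ∈ Icc (0 : ℝ) T, 0 ≤ u t) →
        u 0 = 0 →
        IntegrableOn u' (Icc 0 T) →
        (∀ t ∈ Icc (0 : ℝ) T, u t = ∫ s in (0 : ℝ)..t, u' s) →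
        (∀ t ∈ Icc (0 : ℝ) T, 0 ≤ v t) →
        IntegrableOn v (Icc 0 T) →
        (∀ t ∈ Icc (0 : ℝ) T, 0 ≤ g t) →
        IntegrableOn (fun t => g t ^ 2) (Icc 0 T) →
        (∀ᵐ t ∂(volume.restrict (Icc (0 : ℝ) T)),
          u' t ≤ -(2 * α) * v t + 2 * c * u t + 2 * Real.sqrt (u t) * g t) →
        ∫ t in (0 : ℝ)..T, v t ≤ C * ∫ t in (0 : ℝ)..T, g t ^ 2 := by
  obtain ⟨C, hC, h⟩ := integral_le_of_gronwall_dissipative_general c hT.le hα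
  exact ⟨C, hC, fun u u' v g hu₀ hu0 hu' hu hv₀ hv _ hg hineq => by
    simpa [hu0] using h u u' v g hu₀ hu' (by simpa [hu0] using hu) hv₀ hv hg hineq⟩
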